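/- arXiv:0908.0398 — 3 statements merged into one kernel-verified Lean document; each statement's English description precedes it below -/
import Mathlib

section
/- Let c and s be positive integers and μ a real number with 0 < μ < 1, let c' = ⌊(c-1)/3⌋, and let P be the unconstrained game-1 matrix defined by: p_{(x,y),(x,y)} = (c/(c+s))·(x/c + ((c-x)/c)·((s-y)/s)·(1-μ)) + (s/(c+s))·((y/s)·μ + 1-μ); p_{(x,y),(x,y+1)} = ((c/(c+s))·((c-x)/c) + s/(c+s))·((s-y)/s)·μ for y ≤ s-1; p_{(x,y),(x+1,y-1)} = (c/(c+s))·((c-x)/c)·(y/s)·(1-μ) for x ≤ c-1 and y ≥ 1; p_{(x,y),(x+1,y)} = (c/(c+s))·((c-x)/c)·(y/s)·μ for x ≤ c-1; all other entries 0. Let P_A be the square submatrix of P whose rows and columns are indexed by the safe states A = {(x,y) : 0 ≤ x ≤ c', 0 ≤ y ≤ s}. Then the matrix I - P_A is invertible, where I is the identity matrix of dimension |A|. -/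
/-!
Every allowed transition out of `(x, y)` either stays put, keeps `x` and raises `y`, or raises `x`.
Hence `I - P_A` is upper triangular for the lexicographic order on `A`, and its determinant is the
product of the numbers `1 - p_{(x,y),(x,y)}`. Each of these is positive, since on safe states
`x < c` and therefore some other state is reached from `(x, y)` with positive probability
(`P1u_diag_lt_one`).
-/

open Finset

/-- The transition probability matrix of the unconstrained (adversarial) first game,
defined on pairs `(x, y)` of numbers of red balls in urns `C` and `S`.
Target states are encoded with natural-number equations (`y = y' + 1` means `y' = y - 1`
with `y ≥ 1`); all entries not listed in the paper are `0`. -/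
noncomputable def P1u (c s : ℕ) (μ : ℝ) : ℕ × ℕ → ℕ × ℕ → ℝ :=
  fun p p' =>
    let x := p.1
    let y := p.2
    let x' := p'.1
    let y' := p'.2
    if x' = x ∧ y' = y then
      ((c : ℝ) / (c + s)) * ((x : ℝ) / c + (((c : ℝ) - x) / c) * (((s : ℝ) - y) / s) * (1 - μ))
        + ((s : ℝ) / (c + s)) * (((y : ℝ) / s) * μ + 1 - μ)
    else if x' = x ∧ y' = y + 1 ∧ y + 1 ≤ s then
      (((c : ℝ) / (c + s)) * (((c : ℝ) - x) / c) + (s : ℝ) / (c + s)) * (((s : ℝ) - y) / s) * μ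
    else if x' = x + 1 ∧ y = y' + 1 ∧ x + 1 ≤ c then
      ((c : ℝ) / (c + s)) * (((c : ℝ) - x) / c) * ((y : ℝ) / s) * (1 - μ)
    else if x' = x + 1 ∧ y' = y ∧ x + 1 ≤ c then
      ((c : ℝ) / (c + s)) * (((c : ℝ) - x) / c) * ((y : ℝ) / s) * μ
    else 0

/-- The square submatrix `P_A` of the unconstrained game-1 matrix indexed by the safe
states `A = {(x, y) : 0 ≤ x ≤ ⌊(c-1)/3⌋, 0 ≤ y ≤ s}`. -/
noncomputable def PA (c s : ℕ) (μ : ℝ) :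
    Matrix (Fin ((c - 1) / 3 + 1) × Fin (s + 1)) (Fin ((c - 1) / 3 + 1) × Fin (s + 1)) ℝ :=
  Matrix.of fun a b => P1u c s μ (a.1.val, a.2.val) (b.1.val, b.2.val)

/-- Only `x < c` is needed here; this is where the bound `x ≤ ⌊(c-1)/3⌋` on safe states enters. -/
lemma P1u_diag_lt_one {c s x y : ℕ} {μ : ℝ} (hs : 0 < s) (hμ0 : 0 < μ) (hμ1 : μ < 1)
    (hx : x < c) (hy : y ≤ s) : P1u c s μ (x, y) (x, y) < 1 := by
  have hs' : (0 : ℝ) < s := by exact_mod_cast hs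
  have hx' : (x : ℝ) < c := by exact_mod_cast hx
  have hy' : (y : ℝ) ≤ s := by exact_mod_cast hy
  have hc' : (0 : ℝ) < c := lt_of_le_of_lt (Nat.cast_nonneg x) hx'
  set t : ℝ := (y : ℝ) / s with ht
  have ht1 : t ≤ 1 := (div_le_one hs').2 hy'
  have ht0 : 0 ≤ t := by positivity
  -- The escape probability, grouped by the urn that is selected first.
  have key : 1 - P1u c s μ (x, y) (x, y)
      = ((c - x) * (1 - (1 - t) * (1 - μ)) + s * (μ * (1 - t))) / (c + s) := by
    simp only [P1u, and_self, if_true, ht]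
    field_simp
    ring
  have h1 : 0 < 1 - (1 - t) * (1 - μ) := by nlinarith
  have h2 : 0 < ((c : ℝ) - x) * (1 - (1 - t) * (1 - μ)) := mul_pos (sub_pos.2 hx') h1
  have h3 : 0 ≤ (s : ℝ) * (μ * (1 - t)) :=
    mul_nonneg hs'.le (mul_nonneg hμ0.le (sub_nonneg.2 ht1))
  have h4 : 0 < 1 - P1u c s μ (x, y) (x, y) := by
    rw [key]
    exact div_pos (by linarith) (by linarith)
  linarith

lemma P1u_eq_zero_of_lex_lt {c s x y x' y' : ℕ} {μ : ℝ}
    (h : x' < x ∨ x' = x ∧ y' < y) : P1u c s μ (x, y) (x', y') = 0 := by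
  simp only [P1u]
  rw [if_neg (by omega), if_neg (by omega), if_neg (by omega), if_neg (by omega)]

/-- The matrix `I - P_A` is invertible, where `I` is the identity matrix of
dimension `|A|`. -/
theorem game1_unconstrained_I_sub_PA_invertible (c s : ℕ) (hc : 0 < c) (hs : 0 < s)
    (μ : ℝ) (hμ0 : 0 < μ) (hμ1 : μ < 1) :
    IsUnit ((1 : Matrix (Fin ((c - 1) / 3 + 1) × Fin (s + 1))
        (Fin ((c - 1) / 3 + 1) × Fin (s + 1)) ℝ) - PA c s μ) := by
  rw [Matrix.isUnit_iff_isUnit_det, isUnit_iff_ne_zero]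
  -- `Prod` carries the componentwise order; `ofLex` transports the matrix to the lexicographic one.
  rw [← Matrix.det_submatrix_equiv_self
    (ofLex : Fin ((c - 1) / 3 + 1) ×ₗ Fin (s + 1) ≃ Fin ((c - 1) / 3 + 1) × Fin (s + 1))]
  rw [Matrix.det_of_isUpperTriangular]
  · refine Finset.prod_ne_zero_iff.2 fun i _ => ?_
    have hx := (ofLex i).1.isLt
    have hy := (ofLex i).2.isLt
    have h := P1u_diag_lt_one (c := c) (x := (ofLex i).1.val) (y := (ofLex i).2.val)
      hs hμ0 hμ1 (by omega) (by omega)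
    simp only [Matrix.submatrix_apply, Matrix.sub_apply, Matrix.one_apply_eq, PA, Matrix.of_apply]
    exact (sub_pos.2 h).ne'
  · intro i j hij
    have hlt : j < i := hij
    have hne : ofLex i ≠ ofLex j := fun h => hlt.ne' (ofLex_inj.1 h)
    have h0 : P1u c s μ ((ofLex i).1.val, (ofLex i).2.val)
        ((ofLex j).1.val, (ofLex j).2.val) = 0 := by
      apply P1u_eq_zero_of_lex_lt
      rcases Prod.Lex.lt_iff.1 hlt with h | ⟨h1, h2⟩
      · exact Or.inl h
      · exact Or.inr ⟨congrArg Fin.val h1, h2⟩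
    simp only [Matrix.submatrix_apply, Matrix.sub_apply, Matrix.one_apply_ne hne, PA,
      Matrix.of_apply, h0, sub_zero]
end

section
/- (Theorem 1, game 1.) Let c and s be positive integers and μ a real number with 0 < μ < 1. Define α(x,y) = binom(c,x)·μ^x·(1-μ)^{c-x}·binom(s,y)·μ^y·(1-μ)^{s-y} for 0 ≤ x ≤ c and 0 ≤ y ≤ s, and let P be the constrained game-1 matrix defined by: p_{(x,y),(x,y)} = (xy + (c(s-y) - xs)(1-μ))/((c+s)s) + (yμ + (s-y)(1-μ))/(c+s); p_{(x,y),(x,y-1)} = ((x+s)y/((c+s)s))·(1-μ) for y ≥ 1; p_{(x,y),(x,y+1)} = ((c-x+s)/(c+s))·((s-y)/s)·μ for y ≤ s-1; p_{(x,y),(x+1,y-1)} = ((c-x)y/((c+s)s))·(1-μ) for x ≤ c-1 and y ≥ 1; p_{(x,y),(x+1,y)} = ((c-x)y/((c+s)s))·μ for x ≤ c-1; p_{(x,y),(x-1,y)} = (x(s-y)/((c+s)s))·(1-μ) for x ≥ 1; p_{(x,y),(x-1,y+1)} = (x(s-y)/((c+s)s))·μ for x ≥ 1 and y ≤ s-1;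 all other entries 0. Then α is a stationary (invariant) distribution of P: for all integers i with 0 ≤ i ≤ c and j with 0 ≤ j ≤ s, the sum over all 0 ≤ u ≤ c and 0 ≤ v ≤ s of α(u,v)·p_{(u,v),(i,j)} equals α(i,j). -/
/-!
Write `w` for the binomial weight, so that `alpha` is a product of two such weights. Each weight
satisfies the one-dimensional detailed balance `w (k+1) (k+1) (1-μ) = w k (n-k) μ` (`binW_succ`).
Every entry of the matrix is a sum of products of a function of `u` and a function of `v`,
so the inflow into `(i, j)` splits into products of one-dimensional sums (`flow_eq`), which detailed
balance evaluates (`sum_up`, `sum_down`). Although the two-dimensional chain is not reversible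
entry by entry, the resulting coefficients of `alpha i j` add up to `(c+s)s/((c+s)s) = 1`.
Transitions across the boundary contribute nothing, since the coefficients `i`, `j`, `c-i`, `s-j`
vanish there.
-/

open Finset

/-- The transition probability matrix of the constrained first game (the adversary cannot
prevent red balls from being withdrawn), defined on pairs `(x, y)` of numbers of red balls
in urns `C` and `S`. Target states are encoded with natural-number equations
(`y = y' + 1` means `y' = y - 1` with `y ≥ 1`, `x = x' + 1` means `x' = x - 1` with
`x ≥ 1`); all entries not listed in the paper are `0`. -/
noncomputable def P1c (c s : ℕ) (μ : ℝ) : ℕ × ℕ → ℕ × ℕ → ℝ :=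
  fun p p' =>
    let x := p.1
    let y := p.2
    let x' := p'.1
    let y' := p'.2
    if x' = x ∧ y' = y then
      ((x : ℝ) * y + ((c : ℝ) * ((s : ℝ) - y) - (x : ℝ) * s) * (1 - μ)) / (((c : ℝ) + s) * s)
        + ((y : ℝ) * μ + ((s : ℝ) - y) * (1 - μ)) / ((c : ℝ) + s)
    else if x' = x ∧ y = y' + 1 then
      (((x : ℝ) + s) * y / (((c : ℝ) + s) * s)) * (1 - μ)
    else if x' = x ∧ y' = y + 1 ∧ y + 1 ≤ s then
      ((((c : ℝ) - x) + s) / ((c : ℝ) + s)) * (((s : ℝ) - y) / s) * μ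
    else if x' = x + 1 ∧ y = y' + 1 ∧ x + 1 ≤ c then
      (((c : ℝ) - x) * y / (((c : ℝ) + s) * s)) * (1 - μ)
    else if x' = x + 1 ∧ y' = y ∧ x + 1 ≤ c then
      (((c : ℝ) - x) * y / (((c : ℝ) + s) * s)) * μ
    else if x = x' + 1 ∧ y' = y then
      ((x : ℝ) * ((s : ℝ) - y) / (((c : ℝ) + s) * s)) * (1 - μ)
    else if x = x' + 1 ∧ y' = y + 1 ∧ y + 1 ≤ s then
      ((x : ℝ) * ((s : ℝ) - y) / (((c : ℝ) + s) * s)) * μ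
    else 0

/-- The product-of-binomials distribution `α(x,y)` on the state space. -/
noncomputable def alpha (c s : ℕ) (μ : ℝ) (x y : ℕ) : ℝ :=
  (c.choose x : ℝ) * μ ^ x * (1 - μ) ^ (c - x) * ((s.choose y : ℝ) * μ ^ y * (1 - μ) ^ (s - y))

/-- The binomial weight `binom(n,k) μ^k (1-μ)^(n-k)`, one factor of `alpha`. -/
noncomputable def binW (n : ℕ) (μ : ℝ) (k : ℕ) : ℝ :=
  (n.choose k : ℝ) * μ ^ k * (1 - μ) ^ (n - k)

/-- Detailed balance between neighbouring levels of the binomial weight. -/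
theorem binW_succ (n : ℕ) (μ : ℝ) (k : ℕ) (hk : k + 1 ≤ n) :
    binW n μ (k + 1) * ((k : ℝ) + 1) * (1 - μ) = binW n μ k * ((n : ℝ) - k) * μ := by
  have h : (n.choose (k + 1) : ℝ) * ((k : ℝ) + 1) = (n.choose k : ℝ) * ((n : ℝ) - k) := by
    have h0 := Nat.choose_succ_right_eq n k
    have h1 : ((n - k : ℕ) : ℝ) = (n : ℝ) - k := Nat.cast_sub (by omega)
    rw [← h1]
    exact_mod_cast h0
  have e : n - k = (n - (k + 1)) + 1 := by omega
  unfold binW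
  rw [e, pow_succ, pow_succ]
  linear_combination μ ^ k * μ * (1 - μ) ^ (n - (k + 1)) * (1 - μ) * h

theorem sum_stay (n : ℕ) (i : ℕ) (hi : i ≤ n) (f : ℕ → ℝ) :
    ∑ u ∈ range (n + 1), f u * (if u = i then 1 else 0) = f i := by
  simp [hi]

/-- Mass entering level `i` from level `i - 1` at rate proportional to `n - u`; for `i = 0` both sides vanish. -/
theorem sum_up (n : ℕ) (μ : ℝ) (hμ0 : 0 < μ) (i : ℕ) (hi : i ≤ n) :
    ∑ u ∈ range (n + 1), binW n μ u * ((n : ℝ) - u) * (if i = u + 1 then 1 else 0)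
      = binW n μ i * i * (1 - μ) / μ := by
  cases i with
  | zero => simp
  | succ k =>
    have hb := binW_succ n μ k hi
    simp only [Nat.add_right_cancel_iff, eq_comm (a := k)]
    rw [sum_stay n k (by omega) (fun u => binW n μ u * ((n : ℝ) - u)), eq_div_iff hμ0.ne']
    push_cast
    linarith

/-- Mass entering level `i` from level `i + 1` at rate proportional to `u`; for `i = n` both sides vanish. -/
theorem sum_down (n : ℕ) (μ : ℝ) (hμ1 : μ < 1) (i : ℕ) (hi : i ≤ n) :
    ∑ u ∈ range (n + 1), binW n μ u * (u : ℝ) * (if u = i + 1 then 1 else 0)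
      = binW n μ i * ((n : ℝ) - i) * μ / (1 - μ) := by
  rcases hi.eq_or_lt with rfl | hlt
  · simp
  · have hb := binW_succ n μ i hlt
    rw [sum_stay n (i + 1) hlt (fun u => binW n μ u * (u : ℝ)),
      eq_div_iff (by linarith : (1 - μ) ≠ 0)]
    push_cast
    linarith

set_option maxHeartbeats 2000000 in
/-- The mass flowing from `(u, v)` to `(i, j)` as a combination of products of a function of `u`
and a function of `v`. The four groups are: `u = i` with a coefficient free of `u`, `u = i` with
a coefficient linear in `u`, `u = i - 1`, and `u = i + 1`. -/
theorem flow_eq (c s : ℕ) (hs : 0 < s) (μ : ℝ)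
    (i j u v : ℕ) (hi : i ≤ c) (hj : j ≤ s) :
    alpha c s μ u v * P1c c s μ (u, v) (i, j) = (1 / (((c : ℝ) + s) * s)) * (
      (binW c μ u * (if u = i then 1 else 0)) *
          (((c : ℝ) + s) * (1 - μ) * s * (binW s μ v * (if v = j then 1 else 0))
          + (s * μ - ((c : ℝ) + s) * (1 - μ)) * (binW s μ v * v * (if v = j then 1 else 0))
          + s * (1 - μ) * (binW s μ v * v * (if v = j + 1 then 1 else 0))
          + ((c : ℝ) + s) * μ * (binW s μ v * ((s : ℝ) - v) * (if j = v + 1 then 1 else 0)))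
      + (binW c μ u * u * (if u = i then 1 else 0)) *
          ((binW s μ v * v * (if v = j then 1 else 0))
          - s * (1 - μ) * (binW s μ v * (if v = j then 1 else 0))
          + (1 - μ) * (binW s μ v * v * (if v = j + 1 then 1 else 0))
          - μ * (binW s μ v * ((s : ℝ) - v) * (if j = v + 1 then 1 else 0)))
      + (binW c μ u * ((c : ℝ) - u) * (if i = u + 1 then 1 else 0)) *
          ((1 - μ) * (binW s μ v * v * (if v = j + 1 then 1 else 0))
          + μ * (binW s μ v * v * (if v = j then 1 else 0)))
      + (binW c μ u * u * (if u = i + 1 then 1 else 0)) *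
          ((1 - μ) * (s * (binW s μ v * (if v = j then 1 else 0))
            - (binW s μ v * v * (if v = j then 1 else 0)))
          + μ * (binW s μ v * ((s : ℝ) - v) * (if j = v + 1 then 1 else 0)))) := by
  have hs' : (s : ℝ) ≠ 0 := by positivity
  have hcs : (c : ℝ) + s ≠ 0 := by positivity
  have ha : alpha c s μ u v = binW c μ u * binW s μ v := rfl
  rw [ha]
  unfold P1c
  -- Each coordinate of the source is level, one below, one above, or out of reach of the target.
  have hU : u = i ∨ i = u + 1 ∨ u = i + 1 ∨ (u ≠ i ∧ i ≠ u ∧ i ≠ u + 1 ∧ u ≠ i + 1) := by omega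
  have hV : v = j ∨ j = v + 1 ∨ v = j + 1 ∨ (v ≠ j ∧ j ≠ v ∧ j ≠ v + 1 ∧ v ≠ j + 1) := by omega
  rcases hU with rfl | rfl | rfl | ⟨h1, h1s, h2, h3⟩ <;>
  rcases hV with rfl | rfl | rfl | ⟨h4, h4s, h5, h6⟩ <;>
  simp [*, add_assoc] <;> field_simp <;> ring

/-- (Theorem 1, game 1.) The product-of-binomials distribution `α` is a stationary
(invariant) distribution of the constrained game-1 matrix `P`:
`∑_{(u,v) ∈ S} α(u,v) p_{(u,v),(i,j)} = α(i,j)` for every state `(i,j)`. -/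
theorem game1_constrained_stationary (c s : ℕ) (hc : 0 < c) (hs : 0 < s)
    (μ : ℝ) (hμ0 : 0 < μ) (hμ1 : μ < 1) :
    ∀ i j : ℕ, i ≤ c → j ≤ s →
      ∑ u ∈ Finset.range (c + 1), ∑ v ∈ Finset.range (s + 1),
        alpha c s μ u v * P1c c s μ (u, v) (i, j) = alpha c s μ i j := by
  intro i j hi hj
  have hs' : (s : ℝ) ≠ 0 := by positivity
  have hcs : (c : ℝ) + s ≠ 0 := by positivity
  have hq : (1 - μ) ≠ 0 := by linarith
  have ha : alpha c s μ i j = binW c μ i * binW s μ j := rfl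
  rw [Finset.sum_congr rfl fun u _ => Finset.sum_congr rfl fun v _ =>
    flow_eq c s hs μ i j u v hi hj]
  simp only [← Finset.mul_sum, ← Finset.sum_mul, Finset.sum_add_distrib, Finset.sum_sub_distrib]
  rw [sum_up c μ hμ0 i hi, sum_up s μ hμ0 j hj, sum_down c μ hμ1 i hi, sum_down s μ hμ1 j hj,
    sum_stay c i hi (binW c μ), sum_stay s j hj (binW s μ),
    sum_stay c i hi (fun u => binW c μ u * u), sum_stay s j hj (fun u => binW s μ u * u), ha]
  field_simp
  ring
end

section
/- Let c and s be positive integers and μ a real number with 0 < μ < 1, and let P be the constrained game-1 matrix defined by: p_{(x,y),(x,y)} = (xy + (c(s-y) - xs)(1-μ))/((c+s)s) + (yμ + (s-y)(1-μ))/(c+s); p_{(x,y),(x,y-1)} = ((x+s)y/((c+s)s))·(1-μ) for y ≥ 1; p_{(x,y),(x,y+1)} = ((c-x+s)/(c+s))·((s-y)/s)·μ for y ≤ s-1; p_{(x,y),(x+1,y-1)} = ((c-x)y/((c+s)s))·(1-μ) for x ≤ c-1 and y ≥ 1; p_{(x,y),(x+1,y)} = ((c-x)y/((c+s)s))·μ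 for x ≤ c-1; p_{(x,y),(x-1,y)} = (x(s-y)/((c+s)s))·(1-μ) for x ≥ 1; p_{(x,y),(x-1,y+1)} = (x(s-y)/((c+s)s))·μ for x ≥ 1 and y ≤ s-1; all other entries 0. Then the Markov chain with transition matrix P is irreducible and aperiodic: for every pair of states (x,y), (x',y') in S there exists n ≥ 1 such that the ((x,y),(x',y')) entry of P^n is strictly positive, and moreover there exists a state (x,y) with p_{(x,y),(x,y)} > 0. -/
/-!
All entries of the matrix are nonnegative. For the diagonal entries, `(c + s) s p_{(x,y),(x,y)}` is
affine in `y`, with value `s (1 - μ) (c + s - x) > 0` at `y = 0` and `s μ (x + s) > 0` at `y = s`,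
so every diagonal entry is positive. Hence "`b` is reachable from `a` with positive probability in
at least one step" is a reflexive and transitive relation (`Reach.refl`, `Reach.trans`).

The vertical moves `(x, y) → (x, y ± 1)` inside the rectangle always have positive probability, the
move `(x, s) → (x + 1, s)` has positive probability because `y = s ≥ 1`, and the move
`(x, 0) → (x - 1, 0)` because `y = 0 < s`. So `(x', y')` is reached from `(x, y)` along the top row
if `x ≤ x'`, and along the bottom row if `x' ≤ x`.
-/

open Finset

/-- The constrained game-1 matrix viewed as a square matrix indexed by the state space
`S = {(x, y) : 0 ≤ x ≤ c, 0 ≤ y ≤ s}`. -/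
noncomputable def P1cMatrix (c s : ℕ) (μ : ℝ) :
    Matrix (Fin (c + 1) × Fin (s + 1)) (Fin (c + 1) × Fin (s + 1)) ℝ :=
  Matrix.of fun a b => P1c c s μ (a.1.val, a.2.val) (b.1.val, b.2.val)

lemma P1c_diag_pos {c s : ℕ} (hs : 0 < s) {μ : ℝ} (hμ0 : 0 < μ) (hμ1 : μ < 1)
    {x y : ℕ} (hx : x ≤ c) (hy : y ≤ s) : 0 < P1c c s μ (x, y) (x, y) := by
  have hs' : (0 : ℝ) < s := by exact_mod_cast hs
  have hx' : (x : ℝ) ≤ c := by exact_mod_cast hx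
  have hy' : (y : ℝ) ≤ s := by exact_mod_cast hy
  have hx0 : (0 : ℝ) ≤ x := x.cast_nonneg
  have hy0 : (0 : ℝ) ≤ y := y.cast_nonneg
  have hcs : (0 : ℝ) < c + s := by linarith
  have hν : 0 < 1 - μ := by linarith
  simp only [P1c, and_self, if_true]
  -- The affine interpolation between the values at `y = 0` and `y = s`.
  have key : ((x : ℝ) * y + ((c : ℝ) * ((s : ℝ) - y) - (x : ℝ) * s) * (1 - μ))
        / (((c : ℝ) + s) * s) + ((y : ℝ) * μ + ((s : ℝ) - y) * (1 - μ)) / ((c : ℝ) + s)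
      = (y * (μ * (x + s)) + (s - y) * ((1 - μ) * (c + s - x))) / ((c + s) * s) := by
    field_simp
    ring
  rw [key]
  apply div_pos _ (mul_pos hcs hs')
  have h1 : 0 < μ * (x + s) := mul_pos hμ0 (by linarith)
  have h2 : 0 < (1 - μ) * (c + s - x) := mul_pos hν (by linarith)
  rcases hy0.eq_or_lt with h | h
  · rw [← h]
    simpa using mul_pos hs' h2
  · exact add_pos_of_pos_of_nonneg (mul_pos h h1) (mul_nonneg (by linarith) h2.le)

lemma P1c_nonneg {c s : ℕ} (hs : 0 < s) {μ : ℝ} (hμ0 : 0 < μ) (hμ1 : μ < 1)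
    {x y : ℕ} (hx : x ≤ c) (hy : y ≤ s) (q : ℕ × ℕ) : 0 ≤ P1c c s μ (x, y) q := by
  by_cases h : q = (x, y)
  · rw [h]
    exact (P1c_diag_pos hs hμ0 hμ1 hx hy).le
  · have hx' : (0 : ℝ) ≤ c - x := sub_nonneg.2 (by exact_mod_cast hx)
    have hy' : (0 : ℝ) ≤ s - y := sub_nonneg.2 (by exact_mod_cast hy)
    have hν : 0 ≤ 1 - μ := by linarith
    have h' : ¬ (q.1 = x ∧ q.2 = y) := fun hq => h (Prod.ext hq.1 hq.2)
    simp only [P1c, if_neg h']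
    split_ifs <;> positivity

lemma P1c_down_pos {c s : ℕ} (hs : 0 < s) {μ : ℝ} (hμ1 : μ < 1) (x y : ℕ) :
    0 < P1c c s μ (x, y + 1) (x, y) := by
  have hν : 0 < 1 - μ := by linarith
  have hs' : (0 : ℝ) < s := by exact_mod_cast hs
  simp only [P1c, true_and, left_eq_add, one_ne_zero, if_false, if_true]
  positivity

lemma P1c_up_pos {c s : ℕ} {μ : ℝ} (hμ0 : 0 < μ) {x y : ℕ} (hx : x ≤ c) (hy : y + 1 ≤ s) :
    0 < P1c c s μ (x, y) (x, y + 1) := by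
  have hs' : (0 : ℝ) < s := by exact_mod_cast (by omega : 0 < s)
  have hx' : (0 : ℝ) ≤ c - x := sub_nonneg.2 (by exact_mod_cast hx)
  have hy' : (0 : ℝ) < s - y := sub_pos.2 (by exact_mod_cast hy)
  have h : ¬ y = y + 1 + 1 := by omega
  simp only [P1c, true_and, add_eq_left, one_ne_zero, h, hy, if_false, if_true]
  positivity

lemma P1c_right_pos {c s : ℕ} (hs : 0 < s) {μ : ℝ} (hμ0 : 0 < μ) {x : ℕ} (hx : x + 1 ≤ c) :
    0 < P1c c s μ (x, s) (x + 1, s) := by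
  have hs' : (0 : ℝ) < s := by exact_mod_cast hs
  have hx' : (0 : ℝ) < c - x := sub_pos.2 (by exact_mod_cast hx)
  simp only [P1c, and_true, false_and, and_false, add_eq_left, left_eq_add, one_ne_zero,
    hx, if_false, if_true]
  positivity

lemma P1c_left_pos {c s : ℕ} (hs : 0 < s) {μ : ℝ} (hμ1 : μ < 1) (x : ℕ) :
    0 < P1c c s μ (x + 1, 0) (x, 0) := by
  have hs' : (0 : ℝ) < s := by exact_mod_cast hs
  have hν : 0 < 1 - μ := by linarith
  have h : ¬ x = x + 1 + 1 := by omega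
  simp only [P1c, true_and, and_true, false_and, left_eq_add, one_ne_zero, h,
    if_false, if_true, Nat.cast_zero, sub_zero]
  positivity

/-- `b` is reachable from `a` with positive probability in some number `n ≥ 1` of steps. -/
def Reach (c s : ℕ) (μ : ℝ) (a b : Fin (c + 1) × Fin (s + 1)) : Prop :=
  ∃ n : ℕ, 1 ≤ n ∧ 0 < (P1cMatrix c s μ ^ n) a b

namespace Reach

variable {c s : ℕ} {μ : ℝ}

lemma of_pos {a b : Fin (c + 1) × Fin (s + 1)}
    (h : 0 < P1c c s μ (a.1.val, a.2.val) (b.1.val, b.2.val)) : Reach c s μ a b :=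
  ⟨1, le_rfl, by simpa [P1cMatrix] using h⟩

lemma refl (hs : 0 < s) (hμ0 : 0 < μ) (hμ1 : μ < 1) (a : Fin (c + 1) × Fin (s + 1)) :
    Reach c s μ a a :=
  of_pos (P1c_diag_pos hs hμ0 hμ1 a.1.is_le a.2.is_le)

lemma pow_nonneg (hs : 0 < s) (hμ0 : 0 < μ) (hμ1 : μ < 1) (n : ℕ)
    (a b : Fin (c + 1) × Fin (s + 1)) : 0 ≤ (P1cMatrix c s μ ^ n) a b := by
  induction n generalizing b with
  | zero =>
    rw [pow_zero, Matrix.one_apply]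
    split_ifs <;> norm_num
  | succ n ih =>
    rw [pow_succ, Matrix.mul_apply]
    exact Finset.sum_nonneg fun j _ =>
      mul_nonneg (ih j) (P1c_nonneg hs hμ0 hμ1 j.1.is_le j.2.is_le _)

lemma trans (hs : 0 < s) (hμ0 : 0 < μ) (hμ1 : μ < 1) {a b d : Fin (c + 1) × Fin (s + 1)}
    (h₁ : Reach c s μ a b) (h₂ : Reach c s μ b d) : Reach c s μ a d := by
  obtain ⟨m, hm, hab⟩ := h₁
  obtain ⟨n, -, hbd⟩ := h₂
  refine ⟨m + n, by omega, ?_⟩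
  rw [pow_add, Matrix.mul_apply]
  exact Finset.sum_pos'
    (fun j _ => mul_nonneg (pow_nonneg hs hμ0 hμ1 m a j) (pow_nonneg hs hμ0 hμ1 n j d))
    ⟨b, Finset.mem_univ b, mul_pos hab hbd⟩

lemma up (hs : 0 < s) (hμ0 : 0 < μ) (hμ1 : μ < 1) (x : Fin (c + 1)) {y y' : ℕ} (h : y ≤ y')
    (hy' : y' < s + 1) : Reach c s μ (x, ⟨y, by omega⟩) (x, ⟨y', hy'⟩) := by
  induction y', h using Nat.le_induction with
  | base => exact refl hs hμ0 hμ1 _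
  | succ k _ ih =>
    exact (ih (by omega)).trans hs hμ0 hμ1 (of_pos (P1c_up_pos (y := k) hμ0 x.is_le (by omega)))

lemma down (hs : 0 < s) (hμ0 : 0 < μ) (hμ1 : μ < 1) (x : Fin (c + 1)) {y y' : ℕ} (h : y ≤ y')
    (hy' : y' < s + 1) : Reach c s μ (x, ⟨y', hy'⟩) (x, ⟨y, by omega⟩) := by
  induction y', h using Nat.le_induction with
  | base => exact refl hs hμ0 hμ1 _
  | succ k _ ih =>
    exact (of_pos (P1c_down_pos hs hμ1 x k)).trans hs hμ0 hμ1 (ih (by omega))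

lemma right (hs : 0 < s) (hμ0 : 0 < μ) (hμ1 : μ < 1) {x x' : ℕ} (h : x ≤ x')
    (hx' : x' < c + 1) :
    Reach c s μ (⟨x, by omega⟩, ⟨s, by omega⟩) (⟨x', hx'⟩, ⟨s, by omega⟩) := by
  induction x', h using Nat.le_induction with
  | base => exact refl hs hμ0 hμ1 _
  | succ k _ ih =>
    exact (ih (by omega)).trans hs hμ0 hμ1 (of_pos (P1c_right_pos (x := k) hs hμ0 (by omega)))

lemma left (hs : 0 < s) (hμ0 : 0 < μ) (hμ1 : μ < 1) {x x' : ℕ} (h : x ≤ x')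
    (hx' : x' < c + 1) :
    Reach c s μ (⟨x', hx'⟩, ⟨0, by omega⟩) (⟨x, by omega⟩, ⟨0, by omega⟩) := by
  induction x', h using Nat.le_induction with
  | base => exact refl hs hμ0 hμ1 _
  | succ k _ ih =>
    exact (of_pos (P1c_left_pos hs hμ1 k)).trans hs hμ0 hμ1 (ih (by omega))

end Reach

/-- The Markov chain of the constrained first game is irreducible and aperiodic:
every state leads to every other state in some number `n ≥ 1` of steps with positive
probability, and moreover some state has a positive self-loop probability. -/
theorem game1_constrained_irreducible_aperiodic (c s : ℕ) (hc : 0 < c) (hs : 0 < s)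
    (μ : ℝ) (hμ0 : 0 < μ) (hμ1 : μ < 1) :
    (∀ a b : Fin (c + 1) × Fin (s + 1),
        ∃ n : ℕ, 1 ≤ n ∧ 0 < (P1cMatrix c s μ ^ n) a b) ∧
    (∃ a : Fin (c + 1) × Fin (s + 1), 0 < P1cMatrix c s μ a a) := by
  refine ⟨?_, (0, 0), P1c_diag_pos hs hμ0 hμ1 (Nat.zero_le c) (Nat.zero_le s)⟩
  rintro ⟨⟨x, hx⟩, ⟨y, hy⟩⟩ ⟨⟨x', hx'⟩, ⟨y', hy'⟩⟩
  have hy_s : y ≤ s := by omega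
  have hy_s' : y' ≤ s := by omega
  rcases le_total x x' with h | h
  · exact ((Reach.up hs hμ0 hμ1 _ hy_s _).trans hs hμ0 hμ1
      (Reach.right hs hμ0 hμ1 h hx')).trans hs hμ0 hμ1 (Reach.down hs hμ0 hμ1 _ hy_s' _)
  · exact ((Reach.down hs hμ0 hμ1 _ y.zero_le _).trans hs hμ0 hμ1
      (Reach.left hs hμ0 hμ1 h hx)).trans hs hμ0 hμ1 (Reach.up hs hμ0 hμ1 _ y'.zero_le _)
end
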